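/- For every positive integer d there exists a constant C_d > 0 depending only on d such that the following holds: for all positive integers D, n, a with a ≥ 2 and n ≥ 2 and all data consisting of n clusters in ℝ^D of a points each with diam(B_m) ≤ 1 for every m and with the relaxed separation ‖x−y‖ ≥ √((1 + 2/d)·log n) whenever x ∈ B_i and y ∈ B_j with i ≠ j, any embedding ψ* into ℝ^d attaining a global minimum of the SNE loss L satisfies Q(ψ*) ≤ C_d·log(2a). -/

import Mathlib

/-!
The proof compares the minimizer with one explicit embedding that collapses each cluster to a
point of a grid in `ℝ^d`, of side about `n^(1/d)`.

* All the normalizing sums of the grid embedding are at most `a * K^d` with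
  `K = ∑_{z ∈ ℤ} exp (-z²)`, so pairs inside a cluster cost at most `log (a * K^d)`. Pairs in
  different clusters cost an additional squared distance `O(d * n^(2/d))`, but their total weight
  `∑ p` is `O(n^(-2/d))` by the separation hypothesis. So the minimal loss is at most
  `n * a * (log a + O_d(1))`; see `grid_loss_le`.
* For every embedding, the `N` points in the closed ball around `ψ i` through `ψ j` give
  `1 / q i j ≥ N - 1 ≥ N / 2`, hence `log N ≤ log 2 - log q i j`; see `log_ballCount_le`.
* Inside a cluster `p i j ≥ 1 / (2 e a)`, so averaging the previous bound over the pairs of each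
  cluster bounds the quality by `log 2 + 4 e * L(ψ) / (n * a)`; see `quality_le`.
-/

open Finset

/-- SNE input affinity with scales σᵢ = 2^{-1/2}:
`p(xᵢ,xⱼ) = exp(-‖xᵢ-xⱼ‖²) / ∑_{ℓ≠i} exp(-‖xᵢ-x_ℓ‖²)`. -/
noncomputable def sneP {D k : ℕ} (x : Fin k → EuclideanSpace ℝ (Fin D)) (i j : Fin k) : ℝ :=
  Real.exp (-‖x i - x j‖ ^ 2) / ∑ ℓ ∈ Finset.univ.erase i, Real.exp (-‖x i - x ℓ‖ ^ 2)

/-- SNE output affinity `q(ψᵢ,ψⱼ) = exp(-‖ψᵢ-ψⱼ‖²) / ∑_{ℓ≠i} exp(-‖ψᵢ-ψ_ℓ‖²)`. -/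
noncomputable def sneQ {d k : ℕ} (ψ : Fin k → EuclideanSpace ℝ (Fin d)) (i j : Fin k) : ℝ :=
  Real.exp (-‖ψ i - ψ j‖ ^ 2) / ∑ ℓ ∈ Finset.univ.erase i, Real.exp (-‖ψ i - ψ ℓ‖ ^ 2)

/-- SNE loss `L(ψ) = -∑ᵢ ∑_{j≠i} p(xᵢ,xⱼ) log q(ψᵢ,ψⱼ)`. -/
noncomputable def sneLoss {D d k : ℕ} (x : Fin k → EuclideanSpace ℝ (Fin D))
    (ψ : Fin k → EuclideanSpace ℝ (Fin d)) : ℝ :=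
  -∑ i : Fin k, ∑ j ∈ Finset.univ.erase i, sneP x i j * Real.log (sneQ ψ i j)

/-- The number of indices ℓ with ψ_ℓ in the closed ball centered at ψᵢ of radius ‖ψⱼ-ψᵢ‖. -/
noncomputable def ballCount {d k : ℕ} (ψ : Fin k → EuclideanSpace ℝ (Fin d)) (i j : Fin k) : ℕ :=
  (Finset.univ.filter (fun ℓ => ‖ψ ℓ - ψ i‖ ≤ ‖ψ j - ψ i‖)).card

/-- Quality of an embedding:
`Q(ψ) = (1/n) ∑ₘ (1/(a(a-1))) ∑_{(i,j) distinct in cluster m} log |ψ ∩ B(ψᵢ, ‖ψⱼ-ψᵢ‖)|`. -/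
noncomputable def quality {d k : ℕ} (n a : ℕ) (cl : Fin k → Fin n)
    (ψ : Fin k → EuclideanSpace ℝ (Fin d)) : ℝ :=
  (1 / (n : ℝ)) * ∑ m : Fin n, (1 / ((a : ℝ) * ((a : ℝ) - 1))) *
    ∑ i ∈ Finset.univ.filter (fun i => cl i = m),
      ∑ j ∈ (Finset.univ.filter (fun j => cl j = m)).erase i,
        Real.log (ballCount ψ i j)

/-- Generalized output affinity `q₂(ψᵢ,ψⱼ) = f(‖ψᵢ-ψⱼ‖) / ∑_{ℓ≠i} f(‖ψᵢ-ψ_ℓ‖)`. -/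
noncomputable def genQ {d k : ℕ} (f : ℝ → ℝ) (ψ : Fin k → EuclideanSpace ℝ (Fin d))
    (i j : Fin k) : ℝ :=
  f ‖ψ i - ψ j‖ / ∑ ℓ ∈ Finset.univ.erase i, f ‖ψ i - ψ ℓ‖

/-- Generalized loss `L₂(ψ) = -∑ᵢ ∑_{j≠i} p(xᵢ,xⱼ) log q₂(ψᵢ,ψⱼ)`. -/
noncomputable def genLoss {D d k : ℕ} (f : ℝ → ℝ) (x : Fin k → EuclideanSpace ℝ (Fin D))
    (ψ : Fin k → EuclideanSpace ℝ (Fin d)) : ℝ :=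
  -∑ i : Fin k, ∑ j ∈ Finset.univ.erase i, sneP x i j * Real.log (genQ f ψ i j)

/-! ### Gaussian sums over the integer grid -/

/-- The one-dimensional normalizing constant `∑_{z ∈ ℤ} exp (-z²)`. -/
noncomputable def gaussZ : ℝ := ∑' z : ℤ, Real.exp (-(z : ℝ) ^ 2)

lemma summable_gaussZ : Summable (fun z : ℤ => Real.exp (-(z : ℝ) ^ 2)) := by
  have h : Summable (fun n : ℕ => Real.exp (-(n : ℝ) ^ 2)) := by
    refine Summable.of_nonneg_of_le (fun _ => (Real.exp_pos _).le) (fun n => ?_)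
      Real.summable_exp_neg_nat
    apply Real.exp_le_exp.mpr
    have : (n : ℝ) ≤ (n : ℝ) ^ 2 := by exact_mod_cast Nat.le_self_pow two_ne_zero n
    linarith
  refine Summable.of_nat_of_neg ?_ ?_
  · simpa using h
  · simpa using h

lemma one_le_gaussZ : 1 ≤ gaussZ := by
  have := summable_gaussZ.le_tsum 0 (fun _ _ => (Real.exp_pos _).le)
  simpa [gaussZ] using this

lemma sum_fin_gauss_le (s : ℕ) (h : ℤ) :
    ∑ t : Fin s, Real.exp (-((h : ℝ) - (t : ℕ)) ^ 2) ≤ gaussZ := by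
  have hinj : Function.Injective (fun t : Fin s => h - ((t : ℕ) : ℤ)) := by
    intro t u htu
    apply Fin.ext
    simp only at htu
    omega
  have := summable_gaussZ.sum_le_tsum (univ.map ⟨_, hinj⟩) (fun _ _ => (Real.exp_pos _).le)
  simpa [gaussZ] using this

/-- The point of the integer grid in `ℝ^d` with coordinates `g`. -/
noncomputable def gridPt {d s : ℕ} (g : Fin d → Fin s) : EuclideanSpace ℝ (Fin d) :=
  WithLp.toLp 2 (fun c => ((g c : ℕ) : ℝ))

lemma norm_gridPt_sub_sq {d s : ℕ} (g h : Fin d → Fin s) :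
    ‖gridPt g - gridPt h‖ ^ 2 = ∑ c, (((g c : ℕ) : ℝ) - (h c : ℕ)) ^ 2 := by
  simp [EuclideanSpace.norm_sq_eq, gridPt]

lemma norm_gridPt_sub_sq_le {d s : ℕ} (g h : Fin d → Fin s) :
    ‖gridPt g - gridPt h‖ ^ 2 ≤ d * (s : ℝ) ^ 2 := by
  rw [norm_gridPt_sub_sq]
  have : ∀ c ∈ (univ : Finset (Fin d)),
      (((g c : ℕ) : ℝ) - (h c : ℕ)) ^ 2 ≤ (s : ℝ) ^ 2 := by
    intro c _
    have h1 : ((g c : ℕ) : ℝ) ≤ s := by exact_mod_cast (g c).2.le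
    have h2 : ((h c : ℕ) : ℝ) ≤ s := by exact_mod_cast (h c).2.le
    have h3 : (0 : ℝ) ≤ (g c : ℕ) := Nat.cast_nonneg _
    have h4 : (0 : ℝ) ≤ (h c : ℕ) := Nat.cast_nonneg _
    apply sq_le_sq'
    · linarith
    · linarith
  simpa using Finset.sum_le_sum this

/-- The Gaussian factors over coordinates, so its sum over the grid is a product of
one-dimensional sums. -/
lemma sum_gridPt_le {d s : ℕ} (g : Fin d → Fin s) :
    ∑ h : Fin d → Fin s, Real.exp (-‖gridPt g - gridPt h‖ ^ 2) ≤ gaussZ ^ d := by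
  have h1 : ∀ h : Fin d → Fin s, Real.exp (-‖gridPt g - gridPt h‖ ^ 2)
      = ∏ c, Real.exp (-(((g c : ℕ) : ℝ) - (h c : ℕ)) ^ 2) := by
    intro h
    rw [norm_gridPt_sub_sq, ← Real.exp_sum, Finset.sum_neg_distrib]
  simp_rw [h1]
  rw [← Fintype.prod_sum (fun c (t : Fin s) => Real.exp (-(((g c : ℕ) : ℝ) - (t : ℕ)) ^ 2))]
  calc ∏ c, ∑ t : Fin s, Real.exp (-(((g c : ℕ) : ℝ) - (t : ℕ)) ^ 2)
      ≤ ∏ _c : Fin d, gaussZ := by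
        apply Finset.prod_le_prod
        · intro c _
          exact Finset.sum_nonneg (fun _ _ => (Real.exp_pos _).le)
        · intro c _
          simpa using sum_fin_gauss_le s ((g c : ℕ) : ℤ)
    _ = gaussZ ^ d := by simp

/-- There are `n` distinct points in `ℝ^d` with bounded Gaussian sums and squared diameter
`O(d * n^(2/d))`; here `n^(2/d)` is written `exp ((2 / d) * log n)`. -/
lemma exists_grid (d n : ℕ) (hd : 0 < d) (hn : 2 ≤ n) :
    ∃ G : Fin n → EuclideanSpace ℝ (Fin d),
      (∀ m, ∑ m', Real.exp (-‖G m - G m'‖ ^ 2) ≤ gaussZ ^ d) ∧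
      (∀ m m', ‖G m - G m'‖ ^ 2 ≤ 4 * d * Real.exp (2 / d * Real.log n)) := by
  have hn0 : (0 : ℝ) < n := by positivity
  have hd0 : (d : ℝ) ≠ 0 := by positivity
  set r : ℝ := Real.exp (Real.log n / d) with hr
  have hr1 : 1 ≤ r := Real.one_le_exp (div_nonneg (Real.log_natCast_nonneg n) (by positivity))
  have hrd : r ^ d = n := by
    rw [hr, ← Real.exp_nat_mul, mul_div_cancel₀ _ hd0, Real.exp_log hn0]
  have hr2 : r ^ 2 = Real.exp (2 / d * Real.log n) := by
    rw [hr, ← Real.exp_nat_mul]; congr 1; push_cast; ring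
  set s : ℕ := ⌈r⌉₊ with hs
  have hs1 : r ≤ s := Nat.le_ceil r
  have hs2 : (s : ℝ) ≤ 2 * r := by
    have := Nat.ceil_lt_add_one (zero_le_one.trans hr1)
    linarith
  have hcard : n ≤ s ^ d := by
    have : (n : ℝ) ≤ (s : ℝ) ^ d := by
      rw [← hrd]; exact pow_le_pow_left₀ (zero_le_one.trans hr1) hs1 d
    exact_mod_cast this
  obtain ⟨e⟩ : Nonempty (Fin n ↪ (Fin d → Fin s)) :=
    Function.Embedding.nonempty_of_card_le (by simpa using hcard)
  refine ⟨fun m => gridPt (e m), fun m => ?_, fun m m' => ?_⟩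
  · refine le_trans ?_ (sum_gridPt_le (e m))
    have := Finset.sum_le_univ_sum_of_nonneg (s := univ.map e)
      (f := fun h => Real.exp (-‖gridPt (e m) - gridPt h‖ ^ 2)) (fun _ => (Real.exp_pos _).le)
    simpa using this
  · refine (norm_gridPt_sub_sq_le _ _).trans ?_
    rw [← hr2]
    have h1 : (s : ℝ) ^ 2 ≤ (2 * r) ^ 2 := pow_le_pow_left₀ (Nat.cast_nonneg s) hs2 2
    calc (d : ℝ) * (s : ℝ) ^ 2 ≤ d * (2 * r) ^ 2 := by gcongr
      _ = 4 * d * r ^ 2 := by ring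

/-! ### Affinities and ball counts -/

lemma sum_erase_pos {d k : ℕ} (ψ : Fin k → EuclideanSpace ℝ (Fin d)) {i j : Fin k}
    (hij : j ≠ i) : 0 < ∑ ℓ ∈ univ.erase i, Real.exp (-‖ψ i - ψ ℓ‖ ^ 2) :=
  Finset.sum_pos (fun _ _ => Real.exp_pos _) ⟨j, by simp [hij]⟩

lemma neg_log_sneQ {d k : ℕ} (ψ : Fin k → EuclideanSpace ℝ (Fin d)) {i j : Fin k}
    (hij : j ≠ i) : -Real.log (sneQ ψ i j)
      = ‖ψ i - ψ j‖ ^ 2 + Real.log (∑ ℓ ∈ univ.erase i, Real.exp (-‖ψ i - ψ ℓ‖ ^ 2)) := by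
  rw [sneQ, Real.log_div (Real.exp_pos _).ne' (sum_erase_pos ψ hij).ne', Real.log_exp]
  ring

lemma neg_log_sneQ_nonneg {d k : ℕ} (ψ : Fin k → EuclideanSpace ℝ (Fin d)) {i j : Fin k}
    (hij : j ≠ i) : 0 ≤ -Real.log (sneQ ψ i j) := by
  rw [neg_nonneg]
  apply Real.log_nonpos
  · exact div_nonneg (Real.exp_pos _).le (sum_erase_pos ψ hij).le
  · rw [sneQ, div_le_one (sum_erase_pos ψ hij)]
    exact Finset.single_le_sum (f := fun ℓ => Real.exp (-‖ψ i - ψ ℓ‖ ^ 2))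
      (fun _ _ => (Real.exp_pos _).le) (by simp [hij])

lemma sneP_nonneg {D k : ℕ} (x : Fin k → EuclideanSpace ℝ (Fin D)) (i j : Fin k) :
    0 ≤ sneP x i j :=
  div_nonneg (Real.exp_pos _).le (Finset.sum_nonneg fun _ _ => (Real.exp_pos _).le)

lemma sum_sneP {D k : ℕ} (x : Fin k → EuclideanSpace ℝ (Fin D)) {i j : Fin k}
    (hij : j ≠ i) : ∑ ℓ ∈ univ.erase i, sneP x i ℓ = 1 := by
  simp only [sneP]
  rw [← Finset.sum_div, div_self (sum_erase_pos x hij).ne']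

/-- Each point `ℓ ≠ i` of the ball contributes at least `exp (-‖ψ i - ψ j‖²)` to the normalizing
sum of `i`, so `1 / q i j` is at least the number of points of the ball other than `i`. -/
lemma log_ballCount_le {d k : ℕ} (ψ : Fin k → EuclideanSpace ℝ (Fin d)) {i j : Fin k}
    (hij : j ≠ i) :
    Real.log (ballCount ψ i j) ≤ Real.log 2 + -Real.log (sneQ ψ i j) := by
  set B := univ.filter (fun ℓ => ‖ψ ℓ - ψ i‖ ≤ ‖ψ j - ψ i‖) with hB
  have hiB : i ∈ B := by simp [hB]
  have hjB : j ∈ B := by simp [hB]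
  have hcard : (B.erase i).card + 1 = ballCount ψ i j := by
    rw [Finset.card_erase_add_one hiB, ballCount]
  have hpos : 1 ≤ (B.erase i).card :=
    Finset.card_pos.mpr ⟨j, by simp [hij, hjB]⟩
  have h2 : (ballCount ψ i j : ℝ) ≤ 2 * (B.erase i).card := by
    exact_mod_cast (by omega : ballCount ψ i j ≤ 2 * (B.erase i).card)
  have hpos' : (0 : ℝ) < (B.erase i).card := by exact_mod_cast hpos
  have hNpos : (0 : ℝ) < ballCount ψ i j := by
    exact_mod_cast (by omega : 0 < ballCount ψ i j)
  have hsum : ((B.erase i).card : ℝ) * Real.exp (-‖ψ i - ψ j‖ ^ 2)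
      ≤ ∑ ℓ ∈ univ.erase i, Real.exp (-‖ψ i - ψ ℓ‖ ^ 2) := by
    calc ((B.erase i).card : ℝ) * Real.exp (-‖ψ i - ψ j‖ ^ 2)
        = ∑ ℓ ∈ B.erase i, Real.exp (-‖ψ i - ψ j‖ ^ 2) := by simp
      _ ≤ ∑ ℓ ∈ B.erase i, Real.exp (-‖ψ i - ψ ℓ‖ ^ 2) := by
          apply Finset.sum_le_sum
          intro ℓ hℓ
          have : ‖ψ ℓ - ψ i‖ ≤ ‖ψ j - ψ i‖ := by
            simpa [hB] using Finset.mem_of_mem_erase hℓ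
          rw [norm_sub_rev (ψ i), norm_sub_rev (ψ i)]
          gcongr
      _ ≤ _ := Finset.sum_le_sum_of_subset_of_nonneg
          (Finset.erase_subset_erase _ (Finset.subset_univ _))
          (fun _ _ _ => (Real.exp_pos _).le)
  have hlog := Real.log_le_log (by positivity) hsum
  rw [Real.log_mul hpos'.ne' (Real.exp_pos _).ne', Real.log_exp] at hlog
  have hlog2 := Real.log_le_log hNpos h2
  rw [Real.log_mul two_ne_zero hpos'.ne'] at hlog2
  rw [neg_log_sneQ ψ hij]
  linarith

/-! ### Clustered data -/

section Clusters

variable {D n a : ℕ} {x : Fin (n * a) → EuclideanSpace ℝ (Fin D)} {cl : Fin (n * a) → Fin n}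

lemma exists_ne_same (ha : 2 ≤ a)
    (hcl : ∀ m : Fin n, (univ.filter (fun i => cl i = m)).card = a) (i : Fin (n * a)) :
    ∃ j, j ≠ i ∧ cl j = cl i := by
  obtain ⟨j, hj, hne⟩ := Finset.exists_mem_ne
    (s := univ.filter (fun j => cl j = cl i)) (by rw [hcl]; omega) i
  exact ⟨j, hne, by simpa using hj⟩

/-- Separation in the form used below: with `T = n^(2/d)`, affinity numerators across clusters are
at most `1 / (n * T)`. -/
lemma exp_sep_le {d : ℕ} (hn : 2 ≤ n)
    (hsep : ∀ i j, cl i ≠ cl j →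
      Real.sqrt ((1 + 2 / (d : ℝ)) * Real.log n) ≤ ‖x i - x j‖)
    {i j : Fin (n * a)} (hij : cl i ≠ cl j) :
    Real.exp (-‖x i - x j‖ ^ 2) ≤ 1 / (n * Real.exp (2 / d * Real.log n)) := by
  have hn0 : (0 : ℝ) < n := by positivity
  have h0 : 0 ≤ (1 + 2 / (d : ℝ)) * Real.log n :=
    mul_nonneg (by positivity) (Real.log_natCast_nonneg n)
  have h1 : (1 + 2 / (d : ℝ)) * Real.log n ≤ ‖x i - x j‖ ^ 2 := by
    rw [← Real.sq_sqrt h0]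
    exact pow_le_pow_left₀ (Real.sqrt_nonneg _) (hsep i j hij) 2
  have h2 : (1 : ℝ) / (n * Real.exp (2 / d * Real.log n))
      = Real.exp (-((1 + 2 / (d : ℝ)) * Real.log n)) := by
    rw [Real.exp_neg, one_div, add_mul, one_mul, Real.exp_add, Real.exp_log hn0]
  rw [h2]
  exact Real.exp_le_exp.mpr (by linarith)

lemma card_erase_cluster
    (hcl : ∀ m : Fin n, (univ.filter (fun i => cl i = m)).card = a) (ha : 2 ≤ a)
    (i : Fin (n * a)) :
    (((univ.filter (fun j => cl j = cl i)).erase i).card : ℝ) = a - 1 := by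
  rw [Finset.card_erase_of_mem (by simp), hcl, Nat.cast_sub (by omega), Nat.cast_one]

lemma sum_exp_ge (ha : 2 ≤ a)
    (hcl : ∀ m : Fin n, (univ.filter (fun i => cl i = m)).card = a)
    (hdiam : ∀ i j, cl i = cl j → ‖x i - x j‖ ≤ 1) (i : Fin (n * a)) :
    ((a : ℝ) - 1) * Real.exp (-1) ≤ ∑ ℓ ∈ univ.erase i, Real.exp (-‖x i - x ℓ‖ ^ 2) := by
  rw [← card_erase_cluster hcl ha i, ← nsmul_eq_mul, ← Finset.sum_const]
  refine le_trans (Finset.sum_le_sum (fun ℓ hℓ => ?_))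
    (Finset.sum_le_sum_of_subset_of_nonneg
      (Finset.erase_subset_erase i (Finset.subset_univ _))
      (fun _ _ _ => (Real.exp_pos _).le))
  have hc : cl i = cl ℓ := by
    have := Finset.mem_of_mem_erase hℓ
    simp at this
    exact this.symm
  apply Real.exp_le_exp.mpr
  have := pow_le_one₀ (n := 2) (norm_nonneg _) (hdiam i ℓ hc)
  linarith

lemma sum_exp_le {d : ℕ} (hn : 2 ≤ n)
    (hcl : ∀ m : Fin n, (univ.filter (fun i => cl i = m)).card = a)
    (hsep : ∀ i j, cl i ≠ cl j →
      Real.sqrt ((1 + 2 / (d : ℝ)) * Real.log n) ≤ ‖x i - x j‖) (i : Fin (n * a)) :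
    ∑ ℓ ∈ univ.erase i, Real.exp (-‖x i - x ℓ‖ ^ 2) ≤ 2 * a := by
  have hn0 : (0 : ℝ) < n := by positivity
  calc ∑ ℓ ∈ univ.erase i, Real.exp (-‖x i - x ℓ‖ ^ 2)
      ≤ ∑ ℓ, Real.exp (-‖x i - x ℓ‖ ^ 2) :=
        Finset.sum_le_sum_of_subset_of_nonneg (Finset.subset_univ _)
          (fun _ _ _ => (Real.exp_pos _).le)
    _ ≤ ∑ ℓ, ((if cl ℓ = cl i then 1 else 0) + 1 / (n : ℝ)) := by
        apply Finset.sum_le_sum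
        intro ℓ _
        split_ifs with h
        · have : Real.exp (-‖x i - x ℓ‖ ^ 2) ≤ 1 := by
            apply Real.exp_le_one_iff.mpr
            have := sq_nonneg ‖x i - x ℓ‖
            linarith
          have : 0 < 1 / (n : ℝ) := by positivity
          linarith
        · rw [zero_add]
          refine (exp_sep_le hn hsep (fun h' => h h'.symm)).trans ?_
          apply one_div_le_one_div_of_le hn0
          apply le_mul_of_one_le_right hn0.le
          exact Real.one_le_exp (mul_nonneg (by positivity) (Real.log_natCast_nonneg n))
    _ = 2 * a := by
        rw [Finset.sum_add_distrib, Finset.sum_boole, hcl]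
        simp only [sum_const, card_univ, Fintype.card_fin, nsmul_eq_mul, Nat.cast_mul]
        field_simp
        ring

/-- Average of `log_ballCount_le` over the pairs in a cluster, the weights `1 / (a - 1)` being
dominated by `4 e p i j`. -/
lemma quality_le {d d' : ℕ} (hn : 2 ≤ n) (ha : 2 ≤ a)
    (hcl : ∀ m : Fin n, (univ.filter (fun i => cl i = m)).card = a)
    (hdiam : ∀ i j, cl i = cl j → ‖x i - x j‖ ≤ 1)
    (hsep : ∀ i j, cl i ≠ cl j →
      Real.sqrt ((1 + 2 / (d : ℝ)) * Real.log n) ≤ ‖x i - x j‖)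
    (ψ : Fin (n * a) → EuclideanSpace ℝ (Fin d')) :
    quality n a cl ψ ≤ Real.log 2 + 4 * Real.exp 1 * (sneLoss x ψ / (n * a)) := by
  have hn0 : (0 : ℝ) < n := by positivity
  have ha2 : (2 : ℝ) ≤ a := by exact_mod_cast ha
  have ha0 : (0 : ℝ) < a := by linarith
  have ha1 : (0 : ℝ) < (a : ℝ) - 1 := by linarith
  have hp : ∀ i j, j ≠ i → cl j = cl i → 1 ≤ ((a : ℝ) - 1) * (4 * Real.exp 1 * sneP x i j) := by
    intro i j hji hc
    have h1 : Real.exp (-1) / (2 * a) ≤ sneP x i j := by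
      apply div_le_div₀ (Real.exp_pos _).le _ (sum_erase_pos x hji) (sum_exp_le hn hcl hsep i)
      apply Real.exp_le_exp.mpr
      have := pow_le_one₀ (n := 2) (norm_nonneg _) (hdiam i j hc.symm)
      linarith
    calc (1 : ℝ) ≤ ((a : ℝ) - 1) * (4 * Real.exp 1 * (Real.exp (-1) / (2 * a))) := by
          have he : Real.exp 1 * Real.exp (-1) = 1 := by rw [← Real.exp_add]; simp
          have : ((a : ℝ) - 1) * (4 * Real.exp 1 * (Real.exp (-1) / (2 * a)))
              = (2 * (a - 1)) / a * (Real.exp 1 * Real.exp (-1)) := by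
            field_simp
            ring
          rw [this, he, mul_one, one_le_div ha0]
          linarith
      _ ≤ _ := by gcongr
  have hrow : ∀ i, ∑ j ∈ (univ.filter (fun j => cl j = cl i)).erase i,
      Real.log (ballCount ψ i j) ≤ ((a : ℝ) - 1) * (Real.log 2 + 4 * Real.exp 1 *
        ∑ j ∈ univ.erase i, sneP x i j * -Real.log (sneQ ψ i j)) := by
    intro i
    calc ∑ j ∈ (univ.filter (fun j => cl j = cl i)).erase i, Real.log (ballCount ψ i j)
        ≤ ∑ j ∈ (univ.filter (fun j => cl j = cl i)).erase i, (Real.log 2 +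
            ((a : ℝ) - 1) * (4 * Real.exp 1) * (sneP x i j * -Real.log (sneQ ψ i j))) := by
          apply Finset.sum_le_sum
          intro j hj
          simp only [mem_erase, mem_filter, mem_univ, true_and] at hj
          have h1 := log_ballCount_le ψ hj.1
          have h2 := mul_le_mul_of_nonneg_right (hp i j hj.1 hj.2) (neg_log_sneQ_nonneg ψ hj.1)
          linarith
      _ = ((a : ℝ) - 1) * Real.log 2 + ((a : ℝ) - 1) * (4 * Real.exp 1) *
            ∑ j ∈ (univ.filter (fun j => cl j = cl i)).erase i,
              (sneP x i j * -Real.log (sneQ ψ i j)) := by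
          rw [Finset.sum_add_distrib, Finset.sum_const, nsmul_eq_mul,
            card_erase_cluster hcl ha i, Finset.mul_sum]
      _ ≤ ((a : ℝ) - 1) * Real.log 2 + ((a : ℝ) - 1) * (4 * Real.exp 1) *
            ∑ j ∈ univ.erase i, (sneP x i j * -Real.log (sneQ ψ i j)) := by
          refine add_le_add le_rfl (mul_le_mul_of_nonneg_left ?_ (by positivity))
          apply Finset.sum_le_sum_of_subset_of_nonneg
            (Finset.erase_subset_erase i (Finset.subset_univ _))
          intro j hj _
          exact mul_nonneg (sneP_nonneg x i j) (neg_log_sneQ_nonneg ψ (Finset.ne_of_mem_erase hj))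
      _ = _ := by ring
  have hloss : sneLoss x ψ
      = ∑ i, ∑ j ∈ univ.erase i, sneP x i j * -Real.log (sneQ ψ i j) := by
    simp [sneLoss]
  have hq : quality n a cl ψ = (1 / (n : ℝ)) * (1 / ((a : ℝ) * ((a : ℝ) - 1))) *
      ∑ i, ∑ j ∈ (univ.filter (fun j => cl j = cl i)).erase i, Real.log (ballCount ψ i j) := by
    rw [quality, ← Finset.mul_sum, mul_assoc]
    congr 2
    rw [← Finset.sum_fiberwise univ cl]
    apply Finset.sum_congr rfl
    intro m _
    apply Finset.sum_congr rfl
    intro i hi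
    simp only [mem_filter, mem_univ, true_and] at hi
    rw [hi]
  rw [hq]
  calc (1 / (n : ℝ)) * (1 / ((a : ℝ) * ((a : ℝ) - 1))) *
        ∑ i, ∑ j ∈ (univ.filter (fun j => cl j = cl i)).erase i, Real.log (ballCount ψ i j)
      ≤ (1 / (n : ℝ)) * (1 / ((a : ℝ) * ((a : ℝ) - 1))) *
        ∑ i, ((a : ℝ) - 1) * (Real.log 2 + 4 * Real.exp 1 *
          ∑ j ∈ univ.erase i, sneP x i j * -Real.log (sneQ ψ i j)) := by
        gcongr with i _
        exact hrow i
    _ = _ := by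
        rw [← Finset.mul_sum, Finset.sum_add_distrib, ← Finset.mul_sum, ← hloss]
        simp only [sum_const, card_univ, Fintype.card_fin, nsmul_eq_mul, Nat.cast_mul]
        field_simp

/-! ### The grid embedding -/

/-- Loss of the embedding collapsing each cluster to a grid point. The squared distances
`O(d * n^(2/d))` between grid points are paid for by the total affinity `O(n^(-2/d))` between
different clusters. -/
lemma grid_loss_le {d : ℕ} (hd : 0 < d) (hn : 2 ≤ n) (ha : 2 ≤ a)
    (hcl : ∀ m : Fin n, (univ.filter (fun i => cl i = m)).card = a)
    (hdiam : ∀ i j, cl i = cl j → ‖x i - x j‖ ≤ 1)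
    (hsep : ∀ i j, cl i ≠ cl j →
      Real.sqrt ((1 + 2 / (d : ℝ)) * Real.log n) ≤ ‖x i - x j‖) :
    ∃ ψ : Fin (n * a) → EuclideanSpace ℝ (Fin d),
      sneLoss x ψ ≤ (n * a) * (Real.log a + d * Real.log gaussZ + 8 * Real.exp 1 * d) := by
  obtain ⟨G, hG1, hG2⟩ := exists_grid d n hd hn
  have hn0 : (0 : ℝ) < n := by positivity
  have ha2 : (2 : ℝ) ≤ a := by exact_mod_cast ha
  have ha0 : (0 : ℝ) < a := by linarith
  have ha1 : (0 : ℝ) < (a : ℝ) - 1 := by linarith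
  have hK : 0 < gaussZ := zero_lt_one.trans_le one_le_gaussZ
  set T : ℝ := Real.exp (2 / d * Real.log n) with hT
  have hT0 : 0 < T := Real.exp_pos _
  refine ⟨fun i => G (cl i), ?_⟩
  set ψ : Fin (n * a) → EuclideanSpace ℝ (Fin d) := fun i => G (cl i) with hψ
  set M : ℝ := Real.log a + d * Real.log gaussZ with hM
  have hZ : ∀ i, ∑ ℓ ∈ univ.erase i, Real.exp (-‖ψ i - ψ ℓ‖ ^ 2) ≤ a * gaussZ ^ d := by
    intro i
    calc ∑ ℓ ∈ univ.erase i, Real.exp (-‖ψ i - ψ ℓ‖ ^ 2)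
        ≤ ∑ ℓ, Real.exp (-‖ψ i - ψ ℓ‖ ^ 2) :=
          Finset.sum_le_sum_of_subset_of_nonneg (Finset.subset_univ _)
            (fun _ _ _ => (Real.exp_pos _).le)
      _ = ∑ m, ∑ ℓ ∈ univ.filter (fun ℓ => cl ℓ = m), Real.exp (-‖ψ i - ψ ℓ‖ ^ 2) :=
          (Finset.sum_fiberwise univ cl _).symm
      _ = ∑ m, (a : ℝ) * Real.exp (-‖G (cl i) - G m‖ ^ 2) := by
          apply Finset.sum_congr rfl
          intro m _
          have hconst : ∀ ℓ ∈ univ.filter (fun ℓ => cl ℓ = m),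
              Real.exp (-‖ψ i - ψ ℓ‖ ^ 2) = Real.exp (-‖G (cl i) - G m‖ ^ 2) := by
            intro ℓ hℓ
            simp only [mem_filter, mem_univ, true_and] at hℓ
            simp only [hψ, hℓ]
          rw [Finset.sum_congr rfl hconst, Finset.sum_const, hcl, nsmul_eq_mul]
      _ ≤ a * gaussZ ^ d := by
          rw [← Finset.mul_sum]
          gcongr
          exact hG1 _
  have hrow : ∀ i, ∑ j ∈ univ.erase i, sneP x i j * -Real.log (sneQ ψ i j)
      ≤ M + 8 * Real.exp 1 * d := by
    intro i
    obtain ⟨j₀, hj₀, -⟩ := exists_ne_same ha hcl i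
    have hterm : ∀ j ∈ univ.erase i, sneP x i j * -Real.log (sneQ ψ i j)
        ≤ sneP x i j * M + 8 * Real.exp 1 * d / (n * a) := by
      intro j hj
      have hji := Finset.ne_of_mem_erase hj
      have hlogZ : Real.log (∑ ℓ ∈ univ.erase i, Real.exp (-‖ψ i - ψ ℓ‖ ^ 2)) ≤ M := by
        refine (Real.log_le_log (sum_erase_pos ψ hji) (hZ i)).trans_eq ?_
        rw [Real.log_mul ha0.ne' (pow_pos hK d).ne', Real.log_pow]
      have hp0 := sneP_nonneg x i j
      have hdist : sneP x i j * ‖ψ i - ψ j‖ ^ 2 ≤ 8 * Real.exp 1 * d / (n * a) := by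
        by_cases hc : cl i = cl j
        · have : ‖ψ i - ψ j‖ = 0 := by simp [hψ, hc]
          rw [this]
          simp only [ne_eq, OfNat.ofNat_ne_zero, not_false_eq_true, zero_pow, mul_zero]
          positivity
        · have h1 : sneP x i j ≤ (1 / (n * T)) / (((a : ℝ) - 1) * Real.exp (-1)) :=
            div_le_div₀ (by positivity) (exp_sep_le hn hsep hc) (by positivity)
              (sum_exp_ge ha hcl hdiam i)
          calc sneP x i j * ‖ψ i - ψ j‖ ^ 2
              ≤ ((1 / (n * T)) / (((a : ℝ) - 1) * Real.exp (-1))) * (4 * d * T) := by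
                gcongr
                exact hG2 _ _
            _ = 4 * Real.exp 1 * d / (n * (a - 1)) := by
                rw [Real.exp_neg]
                field_simp
            _ ≤ 4 * Real.exp 1 * d / (n * (a / 2)) := by
                gcongr
                linarith
            _ = 8 * Real.exp 1 * d / (n * a) := by
                field_simp
                norm_num
      rw [neg_log_sneQ ψ hji, mul_add]
      have := mul_le_mul_of_nonneg_left hlogZ hp0
      linarith
    refine (Finset.sum_le_sum hterm).trans ?_
    rw [Finset.sum_add_distrib, ← Finset.sum_mul, sum_sneP x hj₀, one_mul]
    have hc0 : 0 ≤ 8 * Real.exp 1 * d / ((n : ℝ) * a) := by positivity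
    have hle : ∑ j ∈ univ.erase i, 8 * Real.exp 1 * d / ((n : ℝ) * a)
        ≤ ∑ j : Fin (n * a), 8 * Real.exp 1 * d / ((n : ℝ) * a) :=
      Finset.sum_le_sum_of_subset_of_nonneg (Finset.subset_univ _) (fun _ _ _ => hc0)
    have heq : ∑ j : Fin (n * a), 8 * Real.exp 1 * d / ((n : ℝ) * a) = 8 * Real.exp 1 * d := by
      simp only [sum_const, card_univ, Fintype.card_fin, nsmul_eq_mul, Nat.cast_mul]
      field_simp
    linarith
  have hloss : sneLoss x ψ
      = ∑ i, ∑ j ∈ univ.erase i, sneP x i j * -Real.log (sneQ ψ i j) := by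
    simp [sneLoss]
  rw [hloss]
  refine (Finset.sum_le_sum (fun i _ => hrow i)).trans_eq ?_
  simp only [sum_const, card_univ, Fintype.card_fin, nsmul_eq_mul, Nat.cast_mul]

end Clusters

/-! ### The quality guarantee -/

/-- for every output dimension d ≥ 1 there is a constant C_d > 0 such that for
clustered data with the relaxed separation √((1 + 2/d) log n), any global minimizer ψ* of
the SNE loss satisfies Q(ψ*) ≤ C_d·log(2a). -/
theorem sne_embedding_guarantee_relaxed_separation
    (d : ℕ) (hd : 0 < d) :
    ∃ C : ℝ, 0 < C ∧
      ∀ (D n a : ℕ), 0 < D → 2 ≤ n → 2 ≤ a →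
      ∀ (x : Fin (n * a) → EuclideanSpace ℝ (Fin D))
        (cl : Fin (n * a) → Fin n),
        (∀ m : Fin n, (Finset.univ.filter (fun i => cl i = m)).card = a) →
        (∀ i j : Fin (n * a), cl i = cl j → ‖x i - x j‖ ≤ 1) →
        (∀ i j : Fin (n * a), cl i ≠ cl j →
          Real.sqrt ((1 + 2 / (d : ℝ)) * Real.log n) ≤ ‖x i - x j‖) →
        ∀ ψs : Fin (n * a) → EuclideanSpace ℝ (Fin d),
          (∀ ψ : Fin (n * a) → EuclideanSpace ℝ (Fin d),
            sneLoss x ψs ≤ sneLoss x ψ) →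
          quality n a cl ψs ≤ C * Real.log (2 * a) := by
  have hK := Real.log_nonneg one_le_gaussZ
  refine ⟨1 + 4 * Real.exp 1 * (1 + d * Real.log gaussZ + 8 * Real.exp 1 * d), by positivity, ?_⟩
  intro D n a _ hn ha x cl hcl hdiam hsep ψs hmin
  obtain ⟨ψ, hψ⟩ := grid_loss_le hd hn ha hcl hdiam hsep
  have hn0 : (0 : ℝ) < n := by positivity
  have ha2 : (2 : ℝ) ≤ a := by exact_mod_cast ha
  have ha0 : (0 : ℝ) < a := by linarith
  have hL : sneLoss x ψs / (n * a)
      ≤ Real.log a + d * Real.log gaussZ + 8 * Real.exp 1 * d := by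
    rw [div_le_iff₀ (by positivity)]
    exact ((hmin ψ).trans hψ).trans_eq (mul_comm _ _)
  have hQ := quality_le hn ha hcl hdiam hsep ψs
  have hlog2 : Real.log (2 * a) = Real.log 2 + Real.log a :=
    Real.log_mul two_ne_zero ha0.ne'
  have hl2 : Real.log 2 ≤ Real.log a := Real.log_le_log two_pos ha2
  -- `a ≥ 2` makes `log (2 * a) ≥ log 4 > 1`, so the additive constants are absorbed.
  have h1 : 1 ≤ Real.log (2 * a) := by
    have := Real.log_two_gt_d9
    linarith
  have hB : 0 ≤ d * Real.log gaussZ + 8 * Real.exp 1 * d := by positivity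
  have h2 : Real.log a + d * Real.log gaussZ + 8 * Real.exp 1 * d
      ≤ (1 + d * Real.log gaussZ + 8 * Real.exp 1 * d) * Real.log (2 * a) := by
    have := le_mul_of_one_le_right hB h1
    have := Real.log_two_gt_d9
    linarith
  have h3 := mul_le_mul_of_nonneg_left (hL.trans h2) (by positivity : 0 ≤ 4 * Real.exp 1)
  have := Real.log_two_gt_d9
  linarith
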